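/- arXiv:2305.08463 — 2 statements merged into one kernel-verified Lean document; each statement's English description precedes it below -/
import Mathlib

section
/- Assume Assumptions RS and QM, and let (y_t)_{t∈ℕ} be the mode estimate sequence obtained by the MS iteration starting from y₁ with f(y₁) > 0. Then there exists a constant C > 0 such that for every t ∈ ℕ there is an index i_t ∈ {1,…,n} with Ǩ(‖(y_t − x_{i_t})/h‖²/2) ≥ C, and consequently f̌(y_t) ≥ C/(n h^d) for every t ∈ ℕ. -/
open Set Filter Topology MeasureTheory
open scoped BigOperators RealInnerProductSpace

noncomputable section

/-- Euclidean space `ℝ^d`. -/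
abbrev Euc (d : ℕ) := EuclideanSpace ℝ (Fin d)

/-- The convex subdifferential of a function `g` (viewed as a function on `[0,∞)`) at `u`. -/
def subdiffIci (g : ℝ → ℝ) (u : ℝ) : Set ℝ :=
  {c : ℝ | ∀ v ∈ Set.Ici (0:ℝ), g v - g u ≥ c * (v - u)}

/-- Assumption RS: the kernel `K` is bounded, continuous, non-negative, normalized, and
radially symmetric with profile `Khat`. -/
structure AssumptionRS (d : ℕ) (K : Euc d → ℝ) (Khat : ℝ → ℝ) : Prop where
  bounded : ∃ M : ℝ, ∀ x, K x ≤ M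
  cont : Continuous K
  nonneg : ∀ x, 0 ≤ K x
  normalized : ∫ x, K x = 1
  radial : ∀ x, K x = Khat (‖x‖ ^ 2 / 2)

/-- Assumption QM for the profile `Khat`, together with the selection `Kcheck`:
`Khat` is convex and non-increasing on `[0,∞)`, its right derivative at `0` exists as a real
number and equals `-(Kcheck 0)` (i.e. `Kcheck 0 = -Khat'(0+) > -∞`), and for every `u > 0`,
`-(Kcheck u)` belongs to the subdifferential of `Khat` at `u`. -/
structure AssumptionQM (Khat Kcheck : ℝ → ℝ) : Prop where
  convexOn : ConvexOn ℝ (Set.Ici (0:ℝ)) Khat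
  antitoneOn : AntitoneOn Khat (Set.Ici (0:ℝ))
  rderiv0 : Filter.Tendsto (fun v => (Khat v - Khat 0) / v)
      (nhdsWithin 0 (Set.Ioi 0)) (nhds (-(Kcheck 0)))
  subdiff : ∀ u : ℝ, 0 < u → -(Kcheck u) ∈ subdiffIci Khat u

/-- The kernel density estimate `f(y) = (1/(n hᵈ)) ∑ᵢ K((y - xᵢ)/h)`. -/
def KDE (d n : ℕ) (K : Euc d → ℝ) (x : Fin n → Euc d) (h : ℝ) (y : Euc d) : ℝ :=
  (1 / ((n : ℝ) * h ^ d)) * ∑ i : Fin n, K (h⁻¹ • (y - x i))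

/-- `f̌(y) = (1/(n hᵈ)) ∑ᵢ Ǩ(‖(y - xᵢ)/h‖²/2)`. -/
def fcheck (d n : ℕ) (Kcheck : ℝ → ℝ) (x : Fin n → Euc d) (h : ℝ) (y : Euc d) : ℝ :=
  (1 / ((n : ℝ) * h ^ d)) * ∑ i : Fin n, Kcheck (‖h⁻¹ • (y - x i)‖ ^ 2 / 2)

/-- The mean shift vector `m(y)`: zero if `f̌(y) = 0`, and otherwise
`m(y) = ∑ᵢ Ǩ(‖(y - xᵢ)/h‖²/2)(xᵢ - y) / ∑ᵢ Ǩ(‖(y - xᵢ)/h‖²/2)`. -/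
def msMap (d n : ℕ) (Kcheck : ℝ → ℝ) (x : Fin n → Euc d) (h : ℝ) (y : Euc d) : Euc d :=
  if fcheck d n Kcheck x h y = 0 then 0
  else (∑ i : Fin n, Kcheck (‖h⁻¹ • (y - x i)‖ ^ 2 / 2))⁻¹ •
    ∑ i : Fin n, Kcheck (‖h⁻¹ • (y - x i)‖ ^ 2 / 2) • (x i - y)

/-- `y` is a mean shift iteration sequence: `y (t+1) = y t + m (y t)` for all `t`. -/
def MSSeq (d n : ℕ) (Kcheck : ℝ → ℝ) (x : Fin n → Euc d) (h : ℝ) (y : ℕ → Euc d) : Prop :=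
  ∀ t : ℕ, y (t + 1) = y t + msMap d n Kcheck x h (y t)

/-- `f` has the Łojasiewicz property on the set `S`. -/
def LojasiewiczOn (d : ℕ) (f : Euc d → ℝ) (S : Set (Euc d)) : Prop :=
  ∃ ε > (0:ℝ), ∃ c > (0:ℝ), ∃ θ ∈ Set.Ico (0:ℝ) 1,
    ∀ x' ∈ S, ∀ x ∈ S, ‖x' - x‖ < ε → 0 ≤ f x' - f x →
      ‖gradient f x‖ ≥ c * (f x' - f x) ^ θ

/-- `f` satisfies the Łojasiewicz inequality at `ybar` with exponent `θ`, on the set `S`. -/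
def LojasiewiczAtWith (d : ℕ) (f : Euc d → ℝ) (S : Set (Euc d)) (ybar : Euc d) (θ : ℝ) : Prop :=
  ∃ ε > (0:ℝ), ∃ c > (0:ℝ),
    ∀ y ∈ S, ‖ybar - y‖ < ε → 0 ≤ f ybar - f y →
      ‖gradient f y‖ ≥ c * (f ybar - f y) ^ θ

/-- The subgradient inequality, extended to `u = 0`. -/
lemma qm_subgrad {Khat Kcheck : ℝ → ℝ} (hQM : AssumptionQM Khat Kcheck) {u v : ℝ}
    (hu : 0 ≤ u) (hv : 0 ≤ v) : -(Kcheck u) * (v - u) ≤ Khat v - Khat u := by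
  rcases hu.eq_or_lt with rfl | hu
  · rcases hv.eq_or_lt with rfl | hv
    · simp
    · have key : -(Kcheck 0) ≤ (Khat v - Khat 0) / v := by
        refine le_of_tendsto hQM.rderiv0 ?_
        filter_upwards [Ioo_mem_nhdsGT hv] with w hw
        have := hQM.convexOn.secant_mono (a := 0) (x := w) (y := v)
          (by simp) (by simpa using hw.1.le) (by simpa using hv.le) hw.1.ne' hv.ne' hw.2.le
        simpa using this
      rw [le_div_iff₀ hv] at key
      simpa using key
  · exact hQM.subdiff u hu v hv

lemma qm_nonneg {Khat Kcheck : ℝ → ℝ} (hQM : AssumptionQM Khat Kcheck) {u : ℝ}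
    (hu : 0 ≤ u) : 0 ≤ Kcheck u := by
  have h1 := qm_subgrad hQM hu (v := u + 1) (by linarith)
  have h2 := hQM.antitoneOn (a := u) (b := u + 1) hu (by simp; linarith) (by linarith)
  linarith

/-- The profile takes arbitrarily small values. -/
lemma profile_small {d : ℕ} (hd : 0 < d) {K : Euc d → ℝ} {Khat : ℝ → ℝ}
    (hRS : AssumptionRS d K Khat) {s : ℝ} (hs : 0 < s) : ∃ v, 0 ≤ v ∧ Khat v < s := by
  by_contra! hc
  have hint : Integrable K := by
    by_contra hni
    have := integral_undef hni
    rw [hRS.normalized] at this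
    exact one_ne_zero this
  have : Nonempty (Fin d) := ⟨⟨0, hd⟩⟩
  have hcst : Integrable (fun _ : Euc d => s) := by
    refine hint.mono' aestronglyMeasurable_const (Eventually.of_forall fun z => ?_)
    rw [Real.norm_of_nonneg hs.le, hRS.radial]
    exact hc _ (by positivity)
  rw [integrable_const_iff] at hcst
  rcases hcst with h0 | h1
  · exact hs.ne' h0
  · have := h1.measure_univ_lt_top
    rw [measure_univ_of_isAddLeftInvariant] at this
    exact lt_irrefl _ this

lemma ms_ascent {d n : ℕ} {Khat Kcheck : ℝ → ℝ}
    (hQM : AssumptionQM Khat Kcheck)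
    (x : Fin n → Euc d) (h : ℝ) (y : Euc d) :
    ∑ i : Fin n, Khat (‖h⁻¹ • (y - x i)‖ ^ 2 / 2) ≤
      ∑ i : Fin n, Khat (‖h⁻¹ • (y + msMap d n Kcheck x h y - x i)‖ ^ 2 / 2) := by
  by_cases hf : fcheck d n Kcheck x h y = 0
  · simp [msMap, hf]
  have hm : msMap d n Kcheck x h y = (∑ i : Fin n, Kcheck (‖h⁻¹ • (y - x i)‖ ^ 2 / 2))⁻¹ •
    ∑ i : Fin n, Kcheck (‖h⁻¹ • (y - x i)‖ ^ 2 / 2) • (x i - y) := by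
    rw [msMap, if_neg hf]
  have hW : (∑ i : Fin n, Kcheck (‖h⁻¹ • (y - x i)‖ ^ 2 / 2)) ≠ 0 := by
    intro h0; apply hf; rw [fcheck, h0, mul_zero]
  generalize msMap d n Kcheck x h y = m at hm ⊢
  have hw : ∀ i, 0 ≤ Kcheck (‖h⁻¹ • (y - x i)‖ ^ 2 / 2) := fun i =>
    qm_nonneg hQM (by positivity)
  have hsub : ∀ i, Kcheck (‖h⁻¹ • (y - x i)‖ ^ 2 / 2) * ((h⁻¹) ^ 2 / 2 *
      (2 * ⟪x i - y, m⟫ - ‖m‖ ^ 2)) ≤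
      Khat (‖h⁻¹ • (y + m - x i)‖ ^ 2 / 2) - Khat (‖h⁻¹ • (y - x i)‖ ^ 2 / 2) := by
    intro i
    refine le_trans (le_of_eq ?_) (qm_subgrad hQM (u := ‖h⁻¹ • (y - x i)‖ ^ 2 / 2)
      (v := ‖h⁻¹ • (y + m - x i)‖ ^ 2 / 2) (by positivity) (by positivity))
    have e1 : ‖y + m - x i‖ ^ 2 = ‖y - x i‖ ^ 2 - 2 * ⟪x i - y, m⟫ + ‖m‖ ^ 2 := by
      rw [show y + m - x i = (y - x i) + m by abel, norm_add_sq_real,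
        show x i - y = -(y - x i) by abel, inner_neg_left]
      ring
    have e2 : ∀ z : Euc d, ‖h⁻¹ • z‖ ^ 2 / 2 = h⁻¹ ^ 2 / 2 * ‖z‖ ^ 2 := by
      intro z
      rw [norm_smul, mul_pow, Real.norm_eq_abs, sq_abs]; ring
    rw [e2 (y + m - x i), e1, e2 (y - x i)]
    ring
  have hWm : (∑ i : Fin n, Kcheck (‖h⁻¹ • (y - x i)‖ ^ 2 / 2)) • m =
      ∑ i : Fin n, Kcheck (‖h⁻¹ • (y - x i)‖ ^ 2 / 2) • (x i - y) := by
    rw [hm, smul_smul, mul_inv_cancel₀ hW, one_smul]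
  have hin : ∑ i : Fin n, Kcheck (‖h⁻¹ • (y - x i)‖ ^ 2 / 2) * ⟪x i - y, m⟫ =
      (∑ i : Fin n, Kcheck (‖h⁻¹ • (y - x i)‖ ^ 2 / 2)) * ‖m‖ ^ 2 := by
    rw [← real_inner_self_eq_norm_sq, ← real_inner_smul_left, hWm, sum_inner]
    simp only [real_inner_smul_left]
  have hsum := Finset.sum_le_sum (s := Finset.univ) fun i _ => hsub i
  rw [Finset.sum_sub_distrib] at hsum
  have hlhs : ∑ i : Fin n, Kcheck (‖h⁻¹ • (y - x i)‖ ^ 2 / 2) * ((h⁻¹) ^ 2 / 2 *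
      (2 * ⟪x i - y, m⟫ - ‖m‖ ^ 2)) =
      (h⁻¹) ^ 2 / 2 * ((∑ i : Fin n, Kcheck (‖h⁻¹ • (y - x i)‖ ^ 2 / 2)) * ‖m‖ ^ 2) := by
    have : ∀ i, Kcheck (‖h⁻¹ • (y - x i)‖ ^ 2 / 2) * ((h⁻¹) ^ 2 / 2 *
      (2 * ⟪x i - y, m⟫ - ‖m‖ ^ 2)) =
      (h⁻¹) ^ 2 * (Kcheck (‖h⁻¹ • (y - x i)‖ ^ 2 / 2) * ⟪x i - y, m⟫) -
      Kcheck (‖h⁻¹ • (y - x i)‖ ^ 2 / 2) * ((h⁻¹) ^ 2 / 2 * ‖m‖ ^ 2) := fun i => by ring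
    simp only [this]
    rw [Finset.sum_sub_distrib, ← Finset.mul_sum, hin, ← Finset.sum_mul]
    ring
  have hpos : 0 ≤ (h⁻¹) ^ 2 / 2 *
      ((∑ i : Fin n, Kcheck (‖h⁻¹ • (y - x i)‖ ^ 2 / 2)) * ‖m‖ ^ 2) := by
    have := Finset.sum_nonneg (s := Finset.univ) fun i _ => hw i
    positivity
  linarith

/-- Under Assumptions RS and QM, if the MS iteration starts from `y 0` with
`f (y 0) > 0`, then there is `C > 0` such that for every `t` some index `i_t` satisfies
`Ǩ(‖(y t − x_{i_t})/h‖²/2) ≥ C`, and consequently `f̌(y t) ≥ C/(n hᵈ)` for every `t`. -/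
theorem ms_fcheck_lower_bound
    (d n : ℕ) (hd : 0 < d) (hn : 0 < n)
    (K : Euc d → ℝ) (Khat Kcheck : ℝ → ℝ)
    (hRS : AssumptionRS d K Khat) (hQM : AssumptionQM Khat Kcheck)
    (x : Fin n → Euc d) (h : ℝ) (hh : 0 < h)
    (y : ℕ → Euc d) (hy : MSSeq d n Kcheck x h y)
    (hy0 : 0 < KDE d n K x h (y 0)) :
    ∃ C : ℝ, 0 < C ∧ ∀ t : ℕ,
      (∃ i : Fin n, C ≤ Kcheck (‖h⁻¹ • (y t - x i)‖ ^ 2 / 2)) ∧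
      C / ((n : ℝ) * h ^ d) ≤ fcheck d n Kcheck x h (y t) := by
  have : Nonempty (Fin n) := ⟨⟨0, hn⟩⟩
  have hnR : (0:ℝ) < n := by exact_mod_cast hn
  have hhd : (0:ℝ) < (n : ℝ) * h ^ d := by positivity
  have hmono : ∀ t, ∑ i : Fin n, Khat (‖h⁻¹ • (y 0 - x i)‖ ^ 2 / 2) ≤
      ∑ i : Fin n, Khat (‖h⁻¹ • (y t - x i)‖ ^ 2 / 2) := by
    intro t
    induction t with
    | zero => exact le_rfl
    | succ t ih =>
      refine ih.trans ?_
      rw [hy t]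
      exact ms_ascent hQM x h (y t)
  have hS : 0 < ∑ i : Fin n, Khat (‖h⁻¹ • (y 0 - x i)‖ ^ 2 / 2) := by
    rw [KDE] at hy0
    simp only [hRS.radial] at hy0
    exact pos_of_mul_pos_right hy0 (by positivity)
  set S := ∑ i : Fin n, Khat (‖h⁻¹ • (y 0 - x i)‖ ^ 2 / 2) with hSdef
  have hs : 0 < S / n := by positivity
  obtain ⟨v, hv0, hv⟩ := profile_small hd hRS (half_pos hs)
  have hidx : ∀ t, ∃ i : Fin n, S / n ≤ Khat (‖h⁻¹ • (y t - x i)‖ ^ 2 / 2) := by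
    intro t
    by_contra! hc
    have h1 := Finset.sum_lt_sum_of_nonempty (s := Finset.univ) Finset.univ_nonempty
      fun i _ => hc i
    rw [Finset.sum_const, Finset.card_univ, Fintype.card_fin, nsmul_eq_mul,
      mul_div_cancel₀ _ hnR.ne'] at h1
    exact absurd (hmono t) (not_le.mpr h1)
  have hlt : ∀ u, 0 ≤ u → S / n ≤ Khat u → u < v := by
    intro u hu hK
    by_contra! hc
    have := hQM.antitoneOn hv0 hu hc
    linarith
  have hvpos : 0 < v := by
    obtain ⟨i, hi⟩ := hidx 0
    exact lt_of_le_of_lt (by positivity) (hlt _ (by positivity) hi)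
  refine ⟨S / n / 2 / v, by positivity, fun t => ?_⟩
  obtain ⟨i, hi⟩ := hidx t
  have hC : S / n / 2 / v ≤ Kcheck (‖h⁻¹ • (y t - x i)‖ ^ 2 / 2) := by
    have hu : 0 ≤ ‖h⁻¹ • (y t - x i)‖ ^ 2 / 2 := by positivity
    generalize ‖h⁻¹ • (y t - x i)‖ ^ 2 / 2 = u at hi hu ⊢
    have h1 := qm_subgrad hQM hu hv0
    have h2 := qm_nonneg hQM hu
    rw [div_le_iff₀ hvpos]
    nlinarith [mul_nonneg h2 hu]
  refine ⟨⟨i, hC⟩, ?_⟩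
  rw [fcheck, div_eq_mul_one_div, mul_comm]
  refine mul_le_mul_of_nonneg_left (hC.trans ?_) (by positivity)
  exact Finset.single_le_sum (f := fun i => Kcheck (‖h⁻¹ • (y t - x i)‖ ^ 2 / 2))
    (fun j _ => qm_nonneg hQM (by positivity)) (Finset.mem_univ i)
end
end

section
/- Assume Assumptions RS and QM, that the kernel K is differentiable on ℝ^d, and let (y_t)_{t∈ℕ} be the mode estimate sequence obtained by the MS iteration starting from y₁ with f(y₁) > 0. Then there exists a constant b̄ > 0 such that ‖y_{t+1} − y_t‖ ≥ b̄·‖∇f(y_t)‖ for every t ∈ ℕ; in fact one can take b̄ = h^{d+2}/C₂ for any constant C₂ > 0 bounding Ǩ from above. -/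
open Set Filter Topology MeasureTheory
open scoped BigOperators RealInnerProductSpace

noncomputable section

lemma kcheck_nonneg {Khat Kcheck : ℝ → ℝ} (hQM : AssumptionQM Khat Kcheck)
    (u : ℝ) (hu : 0 ≤ u) : 0 ≤ Kcheck u := by
  rcases hu.eq_or_lt with rfl | hu
  · have h1 : -(Kcheck 0) ≤ 0 := by
      refine le_of_tendsto hQM.rderiv0 ?_
      filter_upwards [self_mem_nhdsWithin] with v hv
      have hv' : (0:ℝ) < v := hv
      have := hQM.antitoneOn (Set.mem_Ici.2 le_rfl) (Set.mem_Ici.2 hv'.le) hv'.le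
      exact div_nonpos_of_nonpos_of_nonneg (by linarith) hv'.le
    linarith
  · have h1 := hQM.subdiff u hu (u + 1) (Set.mem_Ici.2 (by linarith))
    have h2 := hQM.antitoneOn (Set.mem_Ici.2 hu.le)
      (Set.mem_Ici.2 (by linarith : (0:ℝ) ≤ u + 1)) (by linarith)
    nlinarith

lemma kcheck_le {Khat Kcheck : ℝ → ℝ} (hQM : AssumptionQM Khat Kcheck)
    (u : ℝ) (hu : 0 ≤ u) : Kcheck u ≤ Kcheck 0 := by
  rcases hu.eq_or_lt with rfl | hu
  · exact le_rfl
  · have h1 : -(Kcheck 0) ≤ -(Kcheck u) := by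
      refine le_of_tendsto hQM.rderiv0 ?_
      filter_upwards [Ioo_mem_nhdsGT hu] with v hv
      have hv0 : 0 < v := hv.1
      have hvu : v < u := hv.2
      have a1 := hQM.subdiff u hu v (Set.mem_Ici.2 hv0.le)
      have a2 := hQM.subdiff v hv0 u (Set.mem_Ici.2 hu.le)
      have a3 := hQM.subdiff v hv0 0 (Set.mem_Ici.2 le_rfl)
      have a4 : Kcheck u ≤ Kcheck v := by
        by_contra hc
        push Not at hc
        nlinarith [mul_pos (sub_pos.2 hc) (sub_pos.2 hvu)]
      rw [div_le_iff₀ hv0]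
      nlinarith
    linarith

lemma kernel_fderiv {d : ℕ} {K : Euc d → ℝ} {Khat Kcheck : ℝ → ℝ}
    (hRS : AssumptionRS d K Khat) (hQM : AssumptionQM Khat Kcheck)
    (hK : Differentiable ℝ K) (z : Euc d) :
    fderiv ℝ K z = -(Kcheck (‖z‖ ^ 2 / 2)) • innerSL ℝ z := by
  by_cases hz : z = 0
  · subst hz
    have hm : IsLocalMax K 0 := by
      refine Filter.Eventually.of_forall fun w => ?_
      simp only [hRS.radial]
      refine hQM.antitoneOn (Set.mem_Ici.2 (by positivity)) (Set.mem_Ici.2 (by positivity)) ?_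
      rw [norm_zero]
      have : 0 ≤ ‖w‖ ^ 2 := by positivity
      linarith
    rw [hm.fderiv_eq_zero]
    simp
  · have hu : 0 < ‖z‖ ^ 2 / 2 := by
      have := norm_pos_iff.2 hz
      positivity
    set c := Kcheck (‖z‖ ^ 2 / 2) with hc
    have hm : IsLocalMin (fun w => K w + (c / 2) * ‖w‖ ^ 2) z := by
      refine Filter.Eventually.of_forall fun w => ?_
      have := hQM.subdiff _ hu (‖w‖ ^ 2 / 2) (Set.mem_Ici.2 (by positivity))
      simp only [hRS.radial]
      rw [← hc] at this
      linarith
    have hder : HasFDerivAt (fun w => K w + (c / 2) * ‖w‖ ^ 2)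
        (fderiv ℝ K z + (c / 2) • ((2:ℝ) • innerSL ℝ z)) z := by
      refine (hK z).hasFDerivAt.add (HasFDerivAt.const_mul ?_ _)
      refine (hasStrictFDerivAt_norm_sq z).hasFDerivAt.congr_fderiv ?_
      ext w
      simp [two_mul, two_smul]
    have h0 := hm.hasFDerivAt_eq_zero hder
    rw [smul_smul] at h0
    rw [eq_neg_of_add_eq_zero_left h0, neg_smul]
    congr 2
    ring

lemma kde_gradient {d n : ℕ} {K : Euc d → ℝ} {Khat Kcheck : ℝ → ℝ}
    (hRS : AssumptionRS d K Khat) (hQM : AssumptionQM Khat Kcheck)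
    (hK : Differentiable ℝ K) (x : Fin n → Euc d) (h : ℝ) (y : Euc d) :
    gradient (KDE d n K x h) y = ((1 / ((n : ℝ) * h ^ d)) * (h⁻¹ * h⁻¹)) •
      ∑ i : Fin n, Kcheck (‖h⁻¹ • (y - x i)‖ ^ 2 / 2) • (x i - y) := by
  apply HasGradientAt.gradient
  rw [hasGradientAt_iff_hasFDerivAt]
  have h1 : ∀ i, HasFDerivAt (fun y : Euc d => K (h⁻¹ • (y - x i)))
      ((fderiv ℝ K (h⁻¹ • (y - x i))).comp (h⁻¹ • ContinuousLinearMap.id ℝ (Euc d))) y := by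
    intro i
    exact (hK _).hasFDerivAt.comp y (((hasFDerivAt_id y).sub_const (x i)).const_smul h⁻¹)
  have h2 := (HasFDerivAt.fun_sum (u := Finset.univ) fun i _ => h1 i).const_mul
    (1 / ((n : ℝ) * h ^ d))
  refine h2.congr_fderiv ?_
  ext w
  simp only [kernel_fderiv hRS hQM hK, smul_apply,
    sum_apply, ContinuousLinearMap.comp_apply, innerSL_apply_apply,
    InnerProductSpace.toDual_apply_apply, inner_smul_left, sum_inner, smul_eq_mul,
    ContinuousLinearMap.id_apply, inner_smul_right, inner_sub_left, Finset.mul_sum]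
  refine Finset.sum_congr rfl fun i _ => ?_
  simp
  ring

lemma ms_step_aux {d n : ℕ} (hn : 0 < n) {K : Euc d → ℝ} {Khat Kcheck : ℝ → ℝ}
    (hRS : AssumptionRS d K Khat) (hQM : AssumptionQM Khat Kcheck)
    (hK : Differentiable ℝ K) (x : Fin n → Euc d) (h : ℝ) (hh : 0 < h) (y : Euc d)
    (C : ℝ) (hC : 0 < C) (hb : ∀ u : ℝ, 0 ≤ u → Kcheck u ≤ C) :
    h ^ (d + 2) / C * ‖gradient (KDE d n K x h) y‖ ≤ ‖msMap d n Kcheck x h y‖ := by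
  have hn' : (0:ℝ) < n := by exact_mod_cast hn
  rw [kde_gradient hRS hQM hK]
  have hnn : ∀ i, 0 ≤ Kcheck (‖h⁻¹ • (y - x i)‖ ^ 2 / 2) :=
    fun i => kcheck_nonneg hQM _ (by positivity)
  have hle : ∑ i, Kcheck (‖h⁻¹ • (y - x i)‖ ^ 2 / 2) ≤ n * C := by
    calc _ ≤ ∑ _i : Fin n, C := Finset.sum_le_sum fun i _ => hb _ (by positivity)
      _ = n * C := by simp
  have hS0 : 0 ≤ ∑ i, Kcheck (‖h⁻¹ • (y - x i)‖ ^ 2 / 2) := Finset.sum_nonneg fun i _ => hnn i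
  unfold msMap fcheck
  split_ifs with h0
  · have hS : ∑ i, Kcheck (‖h⁻¹ • (y - x i)‖ ^ 2 / 2) = 0 := by
      rcases mul_eq_zero.1 h0 with h0 | h0
      · have : 0 < 1 / ((n:ℝ) * h ^ d) := by positivity
        linarith
      · exact h0
    rw [Finset.sum_eq_zero_iff_of_nonneg fun i _ => hnn i] at hS
    rw [Finset.sum_eq_zero fun i hi => by rw [hS i hi, zero_smul]]
    simp
  · have hS : 0 < ∑ i, Kcheck (‖h⁻¹ • (y - x i)‖ ^ 2 / 2) := by
      refine hS0.lt_of_ne fun he => h0 ?_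
      rw [← he, mul_zero]
    generalize ∑ i, Kcheck (‖h⁻¹ • (y - x i)‖ ^ 2 / 2) • (x i - y) = v
    generalize ∑ i, Kcheck (‖h⁻¹ • (y - x i)‖ ^ 2 / 2) = S at *
    rw [norm_smul, norm_smul, ← mul_assoc, Real.norm_of_nonneg (by positivity),
      Real.norm_of_nonneg (by positivity)]
    refine mul_le_mul_of_nonneg_right ?_ (norm_nonneg _)
    have : h ^ (d + 2) / C * (1 / (n * h ^ d) * (h⁻¹ * h⁻¹)) = (n * C)⁻¹ := by
      field_simp
      ring
    rw [this]
    exact inv_anti₀ hS hle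

/-- Under Assumptions RS and QM with `K` differentiable, starting from `y 0` with
`f (y 0) > 0`, there exists `b̄ > 0` such that `‖y_{t+1} − y_t‖ ≥ b̄‖∇f(y_t)‖` for every `t`;
in fact one can take `b̄ = h^{d+2}/C₂` for any constant `C₂ > 0` bounding `Ǩ` from above. -/
theorem ms_step_bounds_gradient
    (d n : ℕ) (hd : 0 < d) (hn : 0 < n)
    (K : Euc d → ℝ) (Khat Kcheck : ℝ → ℝ)
    (hRS : AssumptionRS d K Khat) (hQM : AssumptionQM Khat Kcheck)
    (x : Fin n → Euc d) (h : ℝ) (hh : 0 < h)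
    (hK : Differentiable ℝ K)
    (y : ℕ → Euc d) (hy : MSSeq d n Kcheck x h y)
    (hy0 : 0 < KDE d n K x h (y 0)) :
    (∃ bbar : ℝ, 0 < bbar ∧ ∀ t : ℕ,
        bbar * ‖gradient (KDE d n K x h) (y t)‖ ≤ ‖y (t + 1) - y t‖) ∧
    ∀ C₂ : ℝ, 0 < C₂ → (∀ u : ℝ, 0 ≤ u → Kcheck u ≤ C₂) →
      ∀ t : ℕ,
        h ^ (d + 2) / C₂ * ‖gradient (KDE d n K x h) (y t)‖ ≤ ‖y (t + 1) - y t‖ := by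
  have key : ∀ C₂ : ℝ, 0 < C₂ → (∀ u : ℝ, 0 ≤ u → Kcheck u ≤ C₂) →
      ∀ t : ℕ,
        h ^ (d + 2) / C₂ * ‖gradient (KDE d n K x h) (y t)‖ ≤ ‖y (t + 1) - y t‖ := by
    intro C hC hb t
    rw [hy t, add_sub_cancel_left]
    exact ms_step_aux hn hRS hQM hK x h hh (y t) C hC hb
  refine ⟨?_, key⟩
  have h0 := kcheck_nonneg hQM 0 le_rfl
  refine ⟨h ^ (d + 2) / (Kcheck 0 + 1), by positivity, key _ (by positivity) fun u hu => ?_⟩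
  linarith [kcheck_le hQM u hu]
end
end
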